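/- Let X ~ N(0, σ_X²) and Y ~ N(0, σ_Y²) be independent real Gaussian random variables with σ_X, σ_Y > 0, and let μ > 0. Then E[ (1 − tanh²((X+Y)/μ)) · X² · 1{X+Y > 0} ] ≤ (1/√(2π)) · μ σ_X² σ_Y² / (σ_X² + σ_Y²)^{3/2} + (3/(4√(2π))) · (σ_X² μ³ / (σ_X² + σ_Y²)^{5/2}) · (3μ² + 4σ_X²). -/

import Mathlib

open MeasureTheory ProbabilityTheory Real Matrix
open scoped RealInnerProductSpace ENNReal NNReal

noncomputable section

/-- The Bernoulli–Gaussian law `BG(θ)`: with probability `θ` a standard Gaussian,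
with probability `1-θ` a point mass at `0`. -/
def bg (θ : ℝ) : Measure ℝ :=
  θ.toNNReal • gaussianReal 0 1 + (1 - θ).toNNReal • Measure.dirac 0

instance bg.instIsFiniteMeasure (θ : ℝ) : IsFiniteMeasure (bg θ) := by
  unfold bg; infer_instance

/-- Law of an `n × p` matrix with i.i.d. `BG(θ)` entries. -/
def bgMatrix (θ : ℝ) (n p : ℕ) : Measure (Fin n → Fin p → ℝ) :=
  Measure.pi fun _ => Measure.pi fun _ => bg θ

/-- Law of a vector in `ℝ^n` with i.i.d. `BG(θ)` entries. -/
def bgVec (θ : ℝ) (n : ℕ) : Measure (Fin n → ℝ) :=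
  Measure.pi fun _ => bg θ

/-- The smooth sparsity surrogate `h_μ(z) = μ log cosh (z/μ)`. -/
def hmu (μ z : ℝ) : ℝ := μ * Real.log (Real.cosh (z / μ))

/-- Reparametrization `q(w) = (w, √(1-‖w‖²))` with `w` in the unit ball of `ℝ^{n-1}`. -/
def qmap (n : ℕ) (w : EuclideanSpace ℝ (Fin (n - 1))) : Fin n → ℝ :=
  fun i => if h : (i : ℕ) < n - 1 then w ⟨i, h⟩ else Real.sqrt (1 - ‖w‖ ^ 2)

/-- `f(q; Y) = (1/p) ∑ₖ h_μ(qᵀ yₖ)`. -/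
def ffun (n p : ℕ) (μ : ℝ) (Y : Matrix (Fin n) (Fin p) ℝ)
    (q : EuclideanSpace ℝ (Fin n)) : ℝ :=
  (p : ℝ)⁻¹ * ∑ k : Fin p, hmu μ (∑ i : Fin n, q i * Y i k)

/-- `g(w; Y) = f(q(w); Y)`. -/
def gfun (n p : ℕ) (μ : ℝ) (Y : Matrix (Fin n) (Fin p) ℝ)
    (w : EuclideanSpace ℝ (Fin (n - 1))) : ℝ :=
  (p : ℝ)⁻¹ * ∑ k : Fin p, hmu μ (∑ i : Fin n, qmap n w i * Y i k)

/-- Gradient `∇g(w; Y)` in `w`. -/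
def gradg (n p : ℕ) (μ : ℝ) (Y : Matrix (Fin n) (Fin p) ℝ)
    (w : EuclideanSpace ℝ (Fin (n - 1))) : EuclideanSpace ℝ (Fin (n - 1)) :=
  gradient (gfun n p μ Y) w

/-- Hessian `∇²g(w; Y)` in `w`, as a continuous linear map. -/
def hessg (n p : ℕ) (μ : ℝ) (Y : Matrix (Fin n) (Fin p) ℝ)
    (w : EuclideanSpace ℝ (Fin (n - 1))) :
    EuclideanSpace ℝ (Fin (n - 1)) →L[ℝ] EuclideanSpace ℝ (Fin (n - 1)) :=
  fderiv ℝ (gradg n p μ Y) w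

/-- The set `Γ = {w : ‖w‖ < √((4n-1)/(4n))}`. -/
def GammaSet (n : ℕ) : Set (EuclideanSpace ℝ (Fin (n - 1))) :=
  {w | ‖w‖ < Real.sqrt ((4 * (n : ℝ) - 1) / (4 * n))}

/-- Spectral (`ℓ²→ℓ²` operator) norm of а matrix. -/
def specNorm {m k : ℕ} (M : Matrix (Fin m) (Fin k) ℝ) : ℝ :=
  ‖LinearMap.toContinuousLinearMap (Matrix.toEuclideanLin M)‖

/-- Largest magnitude of an entry of a matrix. -/
def Minf {m k : ℕ} (M : Matrix (Fin m) (Fin k) ℝ) : ℝ := ⨆ i, ⨆ j, |M i j|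

/-- Condition number: ratio of largest to smallest singular value. -/
def kappa {n : ℕ} (s : Fin n → ℝ) : ℝ := (⨆ i, s i) / (⨅ i, s i)

/-- Signed standard basis vectors `{± e_i}` of `ℝ^n`. -/
def SignedBasis (n : ℕ) : Set (EuclideanSpace ℝ (Fin n)) :=
  {b | ∃ i : Fin n, b = EuclideanSpace.single i (1 : ℝ) ∨ b = -EuclideanSpace.single i (1 : ℝ)}

/-- Set of local minimizers of `f(·; Y)` over the unit sphere `S^{n-1}`. -/
def LocalMins (n p : ℕ) (μ : ℝ) (Y : Matrix (Fin n) (Fin p) ℝ) :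
    Set (EuclideanSpace ℝ (Fin n)) :=
  {q | q ∈ Metric.sphere (0 : EuclideanSpace ℝ (Fin n)) 1 ∧
       IsLocalMinOn (ffun n p μ Y) (Metric.sphere (0 : EuclideanSpace ℝ (Fin n)) 1) q}

/-- Expected objective `E_x[h_μ(q(w)ᵀ x)]` for `x` with i.i.d. `BG(θ)` entries. -/
def Gexp (n : ℕ) (θ μ : ℝ) (w : EuclideanSpace ℝ (Fin (n - 1))) : ℝ :=
  ∫ x, hmu μ (∑ i : Fin n, qmap n w i * x i) ∂(bgVec θ n)

/-!
Write `Z = X + Y` and decompose `X = a Z + W`, where `a = σ_X² / (σ_X² + σ_Y²)` and the residual `W`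
is uncorrelated with `Z`, hence independent of it by joint Gaussianity. Then `E[g(Z) X²]` equals
`Var(W) E[g(Z)] + a² E[g(Z) Z²]`, and for `g(z) = (1 - tanh²(z/μ)) 1{z > 0}` both expectations are
estimated by bounding the density of `Z` by its value at `0` and rescaling by `μ`: the integral of
`1 - tanh²` over the positive half-line is `1`, and `1 - tanh² z ≤ 4 exp (-2z)` bounds its second
moment there by `1`.
-/

section Regression

variable {Ω : Type*} {mΩ : MeasurableSpace Ω} {P : Measure Ω} {X Z : Ω → ℝ}

/-- The residual of the linear regression of `X` on `Z`. No intercept is subtracted, so that the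
residual is centered when `X` and `Z` are. -/
def regressionResidual (X Z : Ω → ℝ) (P : Measure Ω) : Ω → ℝ :=
  fun ω ↦ X ω - cov[X, Z; P] / Var[Z; P] * Z ω

lemma memLp_regressionResidual (hX : MemLp X 2 P) (hZ : MemLp Z 2 P) :
    MemLp (regressionResidual X Z P) 2 P :=
  hX.sub (hZ.const_mul _)

lemma integral_regressionResidual_eq_zero (hX : Integrable X P) (hZ : Integrable Z P)
    (hX0 : P[X] = 0) (hZ0 : P[Z] = 0) : P[regressionResidual X Z P] = 0 := by
  simp only [regressionResidual]
  rw [integral_sub hX (hZ.const_mul _), integral_const_mul, hX0, hZ0, mul_zero, sub_zero]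

lemma covariance_regressionResidual_eq_zero [IsFiniteMeasure P] (hX : MemLp X 2 P)
    (hZ : MemLp Z 2 P) (hvar : Var[Z; P] ≠ 0) : cov[Z, regressionResidual X Z P; P] = 0 := by
  unfold regressionResidual
  rw [covariance_fun_sub_right hZ hX (hZ.const_mul _), covariance_const_mul_right,
    covariance_self hZ.aemeasurable, div_mul_cancel₀ _ hvar, covariance_comm, sub_self]

lemma variance_regressionResidual [IsFiniteMeasure P] (hX : MemLp X 2 P) (hZ : MemLp Z 2 P)
    (hvar : Var[Z; P] ≠ 0) :
    Var[regressionResidual X Z P; P] = Var[X; P] - cov[X, Z; P] ^ 2 / Var[Z; P] := by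
  unfold regressionResidual
  rw [variance_fun_sub hX (hZ.const_mul _), covariance_const_mul_right, variance_const_mul]
  field_simp
  ring

lemma indepFun_regressionResidual (h : HasGaussianLaw (fun ω ↦ (X ω, Z ω)) P)
    (hvar : Var[Z; P] ≠ 0) : Z ⟂ᵢ[P] regressionResidual X Z P := by
  have := h.isProbabilityMeasure
  have hpair : HasGaussianLaw (fun ω ↦ (Z ω, regressionResidual X Z P ω)) P :=
    h.map ((ContinuousLinearMap.snd ℝ ℝ ℝ).prod (ContinuousLinearMap.fst ℝ ℝ ℝ -
      (cov[X, Z; P] / Var[Z; P]) • ContinuousLinearMap.snd ℝ ℝ ℝ))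
  exact hpair.indepFun_of_covariance_eq_zero
    (covariance_regressionResidual_eq_zero h.fst.memLp_two h.snd.memLp_two hvar)

lemma integral_comp_mul_add_sq_of_indepFun {W : Ω → ℝ} (hZ : MemLp Z 2 P) (hW : MemLp W 2 P)
    (hZW : Z ⟂ᵢ[P] W) (hW0 : P[W] = 0) (a : ℝ) {g : ℝ → ℝ} (hg : Measurable g) {C : ℝ}
    (hC : ∀ z, |g z| ≤ C) :
    ∫ ω, g (Z ω) * (a * Z ω + W ω) ^ 2 ∂P =
      a ^ 2 * ∫ ω, g (Z ω) * Z ω ^ 2 ∂P + Var[W; P] * ∫ ω, g (Z ω) ∂P := by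
  have hint {f : Ω → ℝ} (hf : Integrable f P) : Integrable (fun ω ↦ g (Z ω) * f ω) P :=
    hf.bdd_mul (hg.comp_aemeasurable hZ.aemeasurable).aestronglyMeasurable
      (.of_forall fun _ ↦ hC _)
  have hZZ := (hint hZ.integrable_sq).const_mul (a ^ 2)
  have hZW' : Integrable (fun ω ↦ 2 * a * (g (Z ω) * (Z ω * W ω))) P :=
    (hint (hZ.integrable_mul hW)).const_mul (2 * a)
  have hsum : Integrable
      (fun ω ↦ a ^ 2 * (g (Z ω) * Z ω ^ 2) + 2 * a * (g (Z ω) * (Z ω * W ω))) P :=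
    hZZ.add hZW'
  have hcross : ∫ ω, g (Z ω) * (Z ω * W ω) ∂P = 0 := by
    have h := hZW.integral_fun_comp_mul_comp (f := fun z ↦ g z * z) (g := id) hZ.aemeasurable
      hW.aemeasurable (hg.mul measurable_id).aestronglyMeasurable aestronglyMeasurable_id
    simpa only [id, hW0, mul_zero, mul_assoc] using h
  have hsq : ∫ ω, g (Z ω) * W ω ^ 2 ∂P = (∫ ω, g (Z ω) ∂P) * Var[W; P] := by
    rw [variance_of_integral_eq_zero hW.aemeasurable hW0]
    exact hZW.integral_fun_comp_mul_comp (g := (· ^ 2)) hZ.aemeasurable hW.aemeasurable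
      hg.aestronglyMeasurable (by fun_prop)
  calc ∫ ω, g (Z ω) * (a * Z ω + W ω) ^ 2 ∂P
    _ = ∫ ω, a ^ 2 * (g (Z ω) * Z ω ^ 2) + 2 * a * (g (Z ω) * (Z ω * W ω)) +
          g (Z ω) * W ω ^ 2 ∂P := by
      congr with ω
      ring
    _ = a ^ 2 * ∫ ω, g (Z ω) * Z ω ^ 2 ∂P + 2 * a * ∫ ω, g (Z ω) * (Z ω * W ω) ∂P +
          ∫ ω, g (Z ω) * W ω ^ 2 ∂P := by
      rw [integral_add hsum (hint hW.integrable_sq), integral_add hZZ hZW',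
        integral_const_mul, integral_const_mul]
    _ = _ := by
      rw [hcross, hsq]
      ring

lemma integral_comp_mul_sq_of_hasGaussianLaw (h : HasGaussianLaw (fun ω ↦ (X ω, Z ω)) P)
    (hX0 : P[X] = 0) (hZ0 : P[Z] = 0) (hvar : Var[Z; P] ≠ 0) {g : ℝ → ℝ} (hg : Measurable g)
    {C : ℝ} (hC : ∀ z, |g z| ≤ C) :
    ∫ ω, g (Z ω) * X ω ^ 2 ∂P =
      (cov[X, Z; P] / Var[Z; P]) ^ 2 * ∫ ω, g (Z ω) * Z ω ^ 2 ∂P +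
        (Var[X; P] - cov[X, Z; P] ^ 2 / Var[Z; P]) * ∫ ω, g (Z ω) ∂P := by
  have := h.isProbabilityMeasure
  have hX := h.fst.memLp_two
  have hZ := h.snd.memLp_two
  have hres := integral_comp_mul_add_sq_of_indepFun hZ (memLp_regressionResidual hX hZ)
    (indepFun_regressionResidual h hvar) (integral_regressionResidual_eq_zero
      h.fst.integrable h.snd.integrable hX0 hZ0) (cov[X, Z; P] / Var[Z; P]) hg hC
  rw [variance_regressionResidual hX hZ hvar] at hres
  simpa only [regressionResidual, add_sub_cancel] using hres

end Regression

section GaussianSum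

variable {Ω : Type*} {mΩ : MeasurableSpace Ω} {P : Measure Ω} {X Y : Ω → ℝ} {u v : ℝ≥0}

lemma hasLaw_fun_add_gaussianReal {m₁ m₂ : ℝ} (hX : HasLaw X (gaussianReal m₁ u) P)
    (hY : HasLaw Y (gaussianReal m₂ v) P) (hXY : X ⟂ᵢ[P] Y) :
    HasLaw (fun ω ↦ X ω + Y ω) (gaussianReal (m₁ + m₂) (u + v)) P where
  aemeasurable := hX.aemeasurable.add hY.aemeasurable
  map_eq := gaussianReal_add_gaussianReal_of_indepFun hXY hX.map_eq hY.map_eq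

lemma covariance_self_add_of_indepFun [IsFiniteMeasure P] (hX : MemLp X 2 P) (hY : MemLp Y 2 P)
    (hXY : X ⟂ᵢ[P] Y) : cov[X, fun ω ↦ X ω + Y ω; P] = Var[X; P] := by
  change cov[X, X + Y; P] = _
  rw [covariance_add_right hX hX hY, covariance_self hX.aemeasurable,
    hXY.covariance_eq_zero hX hY, add_zero]

lemma integral_comp_add_mul_sq (hX : HasLaw X (gaussianReal 0 u) P)
    (hY : HasLaw Y (gaussianReal 0 v) P) (hXY : X ⟂ᵢ[P] Y) (huv : u + v ≠ 0) {g : ℝ → ℝ}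
    (hg : Measurable g) {C : ℝ} (hC : ∀ z, |g z| ≤ C) :
    ∫ ω, g (X ω + Y ω) * X ω ^ 2 ∂P =
      (u / (u + v)) ^ 2 * ∫ z, g z * z ^ 2 ∂gaussianReal 0 (u + v) +
        u * v / (u + v) * ∫ z, g z ∂gaussianReal 0 (u + v) := by
  have hZ : HasLaw (fun ω ↦ X ω + Y ω) (gaussianReal 0 (u + v)) P := by
    simpa only [add_zero] using hasLaw_fun_add_gaussianReal hX hY hXY
  have hpair : HasGaussianLaw (fun ω ↦ (X ω, X ω + Y ω)) P :=
    (hXY.hasGaussianLaw hX.hasGaussianLaw hY.hasGaussianLaw).map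
      ((ContinuousLinearMap.fst ℝ ℝ ℝ).prod
        (ContinuousLinearMap.fst ℝ ℝ ℝ + ContinuousLinearMap.snd ℝ ℝ ℝ))
  have := hX.isProbabilityMeasure
  have hX0 : P[X] = 0 := by rw [hX.integral_eq, integral_id_gaussianReal]
  have hZ0 : P[fun ω ↦ X ω + Y ω] = 0 := by rw [hZ.integral_eq, integral_id_gaussianReal]
  have hvarX : Var[X; P] = u := by rw [hX.variance_eq, variance_id_gaussianReal]
  have hvarZ : Var[fun ω ↦ X ω + Y ω; P] = u + v := by
    rw [hZ.variance_eq, variance_id_gaussianReal, NNReal.coe_add]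
  have hcov : cov[X, fun ω ↦ X ω + Y ω; P] = u := by
    rw [covariance_self_add_of_indepFun hX.hasGaussianLaw.memLp_two hY.hasGaussianLaw.memLp_two
      hXY, hvarX]
  have huv' : (u : ℝ) + v ≠ 0 := mod_cast huv
  have hlaw {f : ℝ → ℝ} (hf : Measurable f) :
      ∫ ω, f (X ω + Y ω) ∂P = ∫ z, f z ∂gaussianReal 0 (u + v) :=
    hZ.integral_comp hf.aestronglyMeasurable
  have hresVar : (u : ℝ) - u ^ 2 / (u + v) = u * v / (u + v) := by
    field_simp
    ring
  rw [integral_comp_mul_sq_of_hasGaussianLaw hpair hX0 hZ0 (by rwa [hvarZ]) hg hC, hcov, hvarX,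
    hvarZ, hresVar, hlaw hg, hlaw (f := fun z ↦ g z * z ^ 2) (by fun_prop)]

end GaussianSum

section GaussianDensity

variable {m : ℝ} {v : ℝ≥0} {f : ℝ → ℝ}

lemma gaussianPDFReal_le (m : ℝ) (v : ℝ≥0) (x : ℝ) : gaussianPDFReal m v x ≤ (√(2 * π * v))⁻¹ := by
  rw [gaussianPDFReal]
  refine mul_le_of_le_one_right (by positivity) (exp_le_one_iff.2 ?_)
  exact div_nonpos_of_nonpos_of_nonneg (neg_nonpos.2 (sq_nonneg _)) (by positivity)

lemma integral_gaussianReal_le (hv : v ≠ 0) (hf : ∀ z, 0 ≤ f z) (hfi : Integrable f) :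
    ∫ z, f z ∂gaussianReal m v ≤ (√(2 * π * v))⁻¹ * ∫ z, f z := by
  rw [integral_gaussianReal_eq_integral_smul hv, ← integral_const_mul]
  exact integral_mono_of_nonneg
    (.of_forall fun z ↦ mul_nonneg (gaussianPDFReal_nonneg m v z) (hf z)) (hfi.const_mul _)
    (.of_forall fun z ↦ mul_le_mul_of_nonneg_right (gaussianPDFReal_le m v z) (hf z))

lemma integral_comp_div_gaussianReal_le (hv : v ≠ 0) (hf : ∀ z, 0 ≤ f z) (hfi : Integrable f)
    {c : ℝ} (hc : 0 < c) :
    ∫ z, f (z / c) ∂gaussianReal m v ≤ (√(2 * π * v))⁻¹ * (c * ∫ z, f z) := by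
  have h := integral_gaussianReal_le (m := m) hv (fun z ↦ hf (z / c)) (hfi.comp_div hc.ne')
  rwa [Measure.integral_comp_div, abs_of_pos hc, smul_eq_mul] at h

end GaussianDensity

section Tanh

lemma one_sub_tanh_le (x : ℝ) : 1 - tanh x ≤ 2 * exp (-2 * x) := by
  have hexp : exp (-2 * x) = exp (-x) * exp (-x) := by
    rw [← exp_add]
    ring_nf
  have hcosh : 1 - tanh x = exp (-x) / cosh x := by
    rw [tanh_eq_sinh_div_cosh, ← cosh_sub_sinh, sub_div, div_self (cosh_pos x).ne']
  have hinv : exp (-x) * exp x = 1 := by rw [← exp_add, neg_add_cancel, exp_zero]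
  rw [hcosh, div_le_iff₀ (cosh_pos x), cosh_eq, hexp]
  nlinarith [exp_pos (-x), pow_pos (exp_pos (-x)) 3]

lemma one_sub_tanh_sq_nonneg (x : ℝ) : 0 ≤ 1 - tanh x ^ 2 :=
  sub_nonneg.2 (tanh_sq_lt_one x).le

lemma one_sub_tanh_sq_le (x : ℝ) : 1 - tanh x ^ 2 ≤ 4 * exp (-2 * x) := by
  nlinarith [one_sub_tanh_le x, tanh_lt_one x, neg_one_lt_tanh x]

lemma hasDerivAt_tanh (x : ℝ) : HasDerivAt tanh (1 - tanh x ^ 2) x := by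
  have hcosh := (cosh_pos x).ne'
  have h := (hasDerivAt_sinh x).fun_div (hasDerivAt_cosh x) hcosh
  simp only [← tanh_eq_sinh_div_cosh] at h
  refine h.congr_deriv ?_
  rw [tanh_eq_sinh_div_cosh]
  field_simp

lemma continuous_tanh : Continuous tanh :=
  continuous_iff_continuousAt.2 fun x ↦ (hasDerivAt_tanh x).continuousAt

lemma tendsto_tanh_atTop : Filter.Tendsto tanh Filter.atTop (nhds 1) := by
  have hexp : Filter.Tendsto (fun x : ℝ ↦ exp (-2 * x)) Filter.atTop (nhds 0) :=
    tendsto_exp_atBot.comp (Filter.tendsto_id.const_mul_atTop_of_neg (by norm_num))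
  have hlower : Filter.Tendsto (fun x : ℝ ↦ 1 - 2 * exp (-2 * x)) Filter.atTop (nhds 1) := by
    simpa using (hexp.const_mul 2).const_sub 1
  exact tendsto_of_tendsto_of_tendsto_of_le_of_le hlower tendsto_const_nhds
    (fun x ↦ sub_le_comm.1 (one_sub_tanh_le x)) (fun x ↦ (tanh_lt_one x).le)

/-- The derivative `1 - tanh²` of `tanh`, truncated to the positive half-line. It is the weight
whose Gaussian moments are to be estimated. -/
def truncTanhDeriv : ℝ → ℝ :=
  (Set.Ioi 0).indicator fun z ↦ 1 - tanh z ^ 2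

lemma measurable_truncTanhDeriv : Measurable truncTanhDeriv :=
  (continuous_const.sub (continuous_tanh.pow 2)).measurable.indicator measurableSet_Ioi

lemma truncTanhDeriv_nonneg (z : ℝ) : 0 ≤ truncTanhDeriv z :=
  Set.indicator_nonneg (fun _ _ ↦ one_sub_tanh_sq_nonneg _) z

lemma truncTanhDeriv_le_one (z : ℝ) : truncTanhDeriv z ≤ 1 :=
  Set.indicator_le' (fun _ _ ↦ sub_le_self _ (sq_nonneg _)) (fun _ _ ↦ zero_le_one) z

lemma abs_truncTanhDeriv_le_one (z : ℝ) : |truncTanhDeriv z| ≤ 1 := by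
  rw [abs_of_nonneg (truncTanhDeriv_nonneg z)]
  exact truncTanhDeriv_le_one z

lemma integrable_truncTanhDeriv : Integrable truncTanhDeriv :=
  (integrableOn_Ioi_deriv_of_nonneg' (fun z _ ↦ hasDerivAt_tanh z)
    (fun _ _ ↦ one_sub_tanh_sq_nonneg _) tendsto_tanh_atTop).integrable_indicator measurableSet_Ioi

lemma integral_truncTanhDeriv : ∫ z, truncTanhDeriv z = 1 := by
  unfold truncTanhDeriv
  rw [integral_indicator measurableSet_Ioi, integral_Ioi_of_hasDerivAt_of_nonneg'
    (fun z _ ↦ hasDerivAt_tanh z) (fun _ _ ↦ one_sub_tanh_sq_nonneg _) tendsto_tanh_atTop,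
    tanh_zero, sub_zero]

lemma integral_Ioi_sq_mul_exp_neg_two_mul :
    ∫ z in Set.Ioi (0 : ℝ), z ^ 2 * exp (-2 * z) = 1 / 4 := by
  have h := integral_rpow_mul_exp_neg_mul_Ioi (a := 3) (r := 2) (by norm_num) (by norm_num)
  have hexponent : (3 : ℝ) - 1 = (2 : ℕ) := by norm_num
  have hGamma : Gamma 3 = 2 := by simp
  have hpow : (1 / 2 : ℝ) ^ (3 : ℝ) = 1 / 8 := by
    norm_num [show (3 : ℝ) = (3 : ℕ) by norm_num, rpow_natCast]
  simp only [hexponent, rpow_natCast, hGamma, hpow, ← neg_mul] at h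
  rw [h]
  norm_num

lemma integrableOn_Ioi_sq_mul_exp_neg_two_mul :
    IntegrableOn (fun z : ℝ ↦ z ^ 2 * exp (-2 * z)) (Set.Ioi 0) :=
  .of_integral_ne_zero (by rw [integral_Ioi_sq_mul_exp_neg_two_mul]; norm_num)

lemma truncTanhDeriv_mul_sq_le (z : ℝ) :
    truncTanhDeriv z * z ^ 2 ≤
      4 * (Set.Ioi 0).indicator (fun z ↦ z ^ 2 * exp (-2 * z)) z := by
  simp only [truncTanhDeriv, Set.indicator_apply, ite_mul, zero_mul, mul_ite, mul_zero]
  split_ifs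
  · linarith [mul_le_mul_of_nonneg_right (one_sub_tanh_sq_le z) (sq_nonneg z)]
  · rfl

lemma truncTanhDeriv_mul_sq_nonneg (z : ℝ) : 0 ≤ truncTanhDeriv z * z ^ 2 :=
  mul_nonneg (truncTanhDeriv_nonneg z) (sq_nonneg z)

lemma integrable_truncTanhDeriv_mul_sq : Integrable fun z ↦ truncTanhDeriv z * z ^ 2 := by
  refine ((integrableOn_Ioi_sq_mul_exp_neg_two_mul.integrable_indicator
    measurableSet_Ioi).const_mul 4).mono'
    (measurable_truncTanhDeriv.mul (measurable_id.pow_const 2)).aestronglyMeasurable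
    (.of_forall fun z ↦ ?_)
  rw [norm_of_nonneg (truncTanhDeriv_mul_sq_nonneg z)]
  exact truncTanhDeriv_mul_sq_le z

lemma integral_truncTanhDeriv_mul_sq_le : ∫ z, truncTanhDeriv z * z ^ 2 ≤ 1 := by
  refine (integral_mono integrable_truncTanhDeriv_mul_sq
    ((integrableOn_Ioi_sq_mul_exp_neg_two_mul.integrable_indicator measurableSet_Ioi).const_mul 4)
    truncTanhDeriv_mul_sq_le).trans_eq ?_
  rw [integral_const_mul, integral_indicator measurableSet_Ioi,
    integral_Ioi_sq_mul_exp_neg_two_mul]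
  norm_num

end Tanh

section Bound

variable {m μ : ℝ} {u v : ℝ≥0}

lemma integral_truncTanhDeriv_div_gaussianReal_le (hv : v ≠ 0) (hμ : 0 < μ) :
    ∫ z, truncTanhDeriv (z / μ) ∂gaussianReal m v ≤ (√(2 * π * v))⁻¹ * μ := by
  simpa only [integral_truncTanhDeriv, mul_one] using
    integral_comp_div_gaussianReal_le (m := m) hv truncTanhDeriv_nonneg integrable_truncTanhDeriv hμ

lemma integral_truncTanhDeriv_div_mul_sq_gaussianReal_le (hv : v ≠ 0) (hμ : 0 < μ) :
    ∫ z, truncTanhDeriv (z / μ) * z ^ 2 ∂gaussianReal m v ≤ (√(2 * π * v))⁻¹ * μ ^ 3 := by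
  have hscale (z : ℝ) : truncTanhDeriv (z / μ) * z ^ 2 =
      μ ^ 2 * (truncTanhDeriv (z / μ) * (z / μ) ^ 2) := by
    field_simp
  simp_rw [hscale]
  rw [integral_const_mul]
  calc μ ^ 2 * ∫ z, truncTanhDeriv (z / μ) * (z / μ) ^ 2 ∂gaussianReal m v
    _ ≤ μ ^ 2 * ((√(2 * π * v))⁻¹ * (μ * ∫ z, truncTanhDeriv z * z ^ 2)) := by
      gcongr
      exact integral_comp_div_gaussianReal_le hv truncTanhDeriv_mul_sq_nonneg
        integrable_truncTanhDeriv_mul_sq hμ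
    _ ≤ μ ^ 2 * ((√(2 * π * v))⁻¹ * (μ * 1)) := by
      gcongr
      exact integral_truncTanhDeriv_mul_sq_le
    _ = (√(2 * π * v))⁻¹ * μ ^ 3 := by ring

lemma integral_truncTanhDeriv_add_div_mul_sq_le {Ω : Type*} {mΩ : MeasurableSpace Ω}
    {P : Measure Ω} {X Y : Ω → ℝ} (hX : HasLaw X (gaussianReal 0 u) P)
    (hY : HasLaw Y (gaussianReal 0 v) P) (hXY : X ⟂ᵢ[P] Y) (huv : u + v ≠ 0) (hμ : 0 < μ) :
    ∫ ω, truncTanhDeriv ((X ω + Y ω) / μ) * X ω ^ 2 ∂P ≤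
      (√(2 * π * (u + v)))⁻¹ * (u * v / (u + v) * μ + (u / (u + v)) ^ 2 * μ ^ 3) := by
  have hzeroth := integral_truncTanhDeriv_div_gaussianReal_le (m := 0) huv hμ
  have hsecond := integral_truncTanhDeriv_div_mul_sq_gaussianReal_le (m := 0) huv hμ
  rw [NNReal.coe_add] at hzeroth hsecond
  rw [integral_comp_add_mul_sq hX hY hXY huv (g := fun z ↦ truncTanhDeriv (z / μ))
    (measurable_truncTanhDeriv.comp (measurable_id.div_const μ))
    fun z ↦ abs_truncTanhDeriv_le_one (z / μ)]
  calc _ ≤ (u / (u + v) : ℝ) ^ 2 * ((√(2 * π * (u + v)))⁻¹ * μ ^ 3) +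
        u * v / (u + v) * ((√(2 * π * (u + v)))⁻¹ * μ) := by gcongr
    _ = _ := by ring

lemma inv_sqrt_mul_moments_le_rpow {a b : ℝ} (ha : 0 ≤ a) (hab : 0 < a + b) (hμ : 0 ≤ μ) :
    (√(2 * π * (a + b)))⁻¹ * (a * b / (a + b) * μ + (a / (a + b)) ^ 2 * μ ^ 3) ≤
      1 / √(2 * π) * (μ * a * b / (a + b) ^ ((3 : ℝ) / 2)) +
        3 / (4 * √(2 * π)) * (a * μ ^ 3 / (a + b) ^ ((5 : ℝ) / 2)) * (3 * μ ^ 2 + 4 * a) := by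
  have h32 : (a + b) ^ ((3 : ℝ) / 2) = (a + b) * √(a + b) := by
    rw [sqrt_eq_rpow, ← rpow_one_add' hab.le (by norm_num)]
    norm_num
  have h52 : (a + b) ^ ((5 : ℝ) / 2) = (a + b) ^ 2 * √(a + b) := by
    rw [sqrt_eq_rpow, ← rpow_natCast, ← rpow_add hab]
    norm_num
  have hgap : 0 ≤ a * μ ^ 3 / (√(2 * π) * ((a + b) ^ 2 * √(a + b))) *
      (9 / 4 * μ ^ 2 + 2 * a) := by positivity
  rw [h32, h52, sqrt_mul (by positivity), ← sub_nonneg]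
  refine hgap.trans_eq ?_
  field_simp
  ring

end Bound

/-- Lemma: Gaussian expectation bound for
`(1 - tanh²((X+Y)/μ)) X² 1{X+Y>0}`. -/
theorem statement16 (σX σY μ : ℝ) (hX : 0 < σX) (hY : 0 < σY) (hμ : 0 < μ) :
    (∫ v : ℝ × ℝ,
        (if 0 < v.1 + v.2 then (1 - Real.tanh ((v.1 + v.2) / μ) ^ 2) * v.1 ^ 2 else 0)
        ∂((gaussianReal 0 ⟨σX ^ 2, sq_nonneg σX⟩).prod
            (gaussianReal 0 ⟨σY ^ 2, sq_nonneg σY⟩))) ≤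
      1 / Real.sqrt (2 * π) * (μ * σX ^ 2 * σY ^ 2 / (σX ^ 2 + σY ^ 2) ^ ((3 : ℝ) / 2)) +
      3 / (4 * Real.sqrt (2 * π)) * (σX ^ 2 * μ ^ 3 / (σX ^ 2 + σY ^ 2) ^ ((5 : ℝ) / 2)) *
        (3 * μ ^ 2 + 4 * σX ^ 2) := by
  set u : ℝ≥0 := ⟨σX ^ 2, sq_nonneg σX⟩
  set v : ℝ≥0 := ⟨σY ^ 2, sq_nonneg σY⟩
  have hS : 0 < σX ^ 2 + σY ^ 2 := by positivity
  have huv : u + v ≠ 0 := NNReal.coe_ne_zero.1 hS.ne'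
  have hfst : HasLaw Prod.fst (gaussianReal 0 u) ((gaussianReal 0 u).prod (gaussianReal 0 v)) :=
    measurePreserving_fst.hasLaw
  have hsnd : HasLaw Prod.snd (gaussianReal 0 v) ((gaussianReal 0 u).prod (gaussianReal 0 v)) :=
    measurePreserving_snd.hasLaw
  have hintegrand (p : ℝ × ℝ) :
      (if 0 < p.1 + p.2 then (1 - tanh ((p.1 + p.2) / μ) ^ 2) * p.1 ^ 2 else 0) =
        truncTanhDeriv ((p.1 + p.2) / μ) * p.1 ^ 2 := by
    simp only [truncTanhDeriv, Set.indicator_apply, Set.mem_Ioi, div_pos_iff_of_pos_right hμ,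
      ite_mul, zero_mul]
  simp_rw [hintegrand]
  exact (integral_truncTanhDeriv_add_div_mul_sq_le hfst hsnd
    (indepFun_prod measurable_id measurable_id) huv hμ).trans
    (inv_sqrt_mul_moments_le_rpow (sq_nonneg σX) hS hμ.le)

end
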